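/- For every real C > 0 there exists δ > 0 such that for every a ∈ (0, δ) ∪ (2π−δ, 2π) and every ω ∈ (0, 3/4], one has −cos(2(a−π)ω) + (C+1)·cos(2πω) − C ≠ 0; that is, the smallest positive zero ω₁(a) of f(·, C) satisfies ω₁(a) > 3/4 when a is sufficiently close to 0 or to 2π. -/

import Mathlib

open scoped Real

/-!
The product-to-sum formulas give
`f(ω) = -2 (C sin² (πω) + sin (aω) sin ((2π - a)ω))`.
In absolute value the second summand is at most `|a (2π - a)| ω²`, whereas Jordan's inequality,
used on both halves of `[0, 1]`, shows that the first is at least `4 |C| (1 - ω)² ω²`. Both bounds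
are of order `ω²`, so once `|a (2π - a)|` is small the first summand dominates on the whole of
`(0, Ω]`, for any `Ω < 1`.
-/

/-- The function `f(ω, C)` whose smallest positive zero is the square root of the first nontrivial
eigenvalue of the weighted Wirtinger problem with arcs of lengths `a` and `2π - a`. The arc length
`a` is made an explicit argument, and all three arguments range over all real numbers. -/
noncomputable def transmissionDeterminant (C a ω : ℝ) : ℝ :=
  -Real.cos (2 * (a - π) * ω) + (C + 1) * Real.cos (2 * π * ω) - C

theorem two_mul_mul_one_sub_le_sin_pi_mul {x : ℝ} (hx₀ : 0 ≤ x) (hx₁ : x ≤ 1) :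
    2 * x * (1 - x) ≤ Real.sin (π * x) := by
  have jordan {y : ℝ} (hy₀ : 0 ≤ y) (hy : y ≤ 1 / 2) : 2 * y ≤ Real.sin (π * y) := by
    have h := Real.le_sin_mul (x := 2 * y) (by linarith) (by linarith)
    rwa [show π / 2 * (2 * y) = π * y by ring] at h
  rcases le_total x (1 / 2) with hx | hx
  · nlinarith [jordan hx₀ hx]
  · have h := jordan (sub_nonneg.mpr hx₁) (by linarith)
    rw [mul_sub π, mul_one, Real.sin_pi_sub] at h
    nlinarith

namespace transmissionDeterminant

theorem eq_neg_two_mul (C a ω : ℝ) :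
    transmissionDeterminant C a ω =
      -2 * (C * Real.sin (π * ω) ^ 2 + Real.sin (a * ω) * Real.sin ((2 * π - a) * ω)) := by
  have hcos : Real.cos (2 * π * ω) - Real.cos (2 * (a - π) * ω) =
      -2 * Real.sin (a * ω) * Real.sin ((2 * π - a) * ω) := by
    rw [Real.cos_sub_cos]
    ring_nf
  have hsq : Real.cos (2 * π * ω) = 1 - 2 * Real.sin (π * ω) ^ 2 := by
    rw [mul_assoc, Real.cos_two_mul, Real.cos_sq']
    ring
  unfold transmissionDeterminant
  linear_combination hcos + C * hsq

theorem ne_zero_of_abs_mul_lt {C a ω : ℝ} (hω₀ : 0 < ω) (hω₁ : ω ≤ 1)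
    (ha : |a * (2 * π - a)| < 4 * |C| * (1 - ω) ^ 2) : transmissionDeterminant C a ω ≠ 0 := by
  have hlt : |Real.sin (a * ω) * Real.sin ((2 * π - a) * ω)| < |C * Real.sin (π * ω) ^ 2| :=
    calc |Real.sin (a * ω) * Real.sin ((2 * π - a) * ω)|
        = |Real.sin (a * ω)| * |Real.sin ((2 * π - a) * ω)| := abs_mul _ _
      _ ≤ |a * ω| * |(2 * π - a) * ω| :=
          mul_le_mul Real.abs_sin_le_abs Real.abs_sin_le_abs (abs_nonneg _) (abs_nonneg _)
      _ = |a * (2 * π - a)| * ω ^ 2 := by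
          simp only [abs_mul, abs_of_pos hω₀]
          ring
      _ < 4 * |C| * (1 - ω) ^ 2 * ω ^ 2 := by gcongr
      _ = |C| * (2 * ω * (1 - ω)) ^ 2 := by ring
      _ ≤ |C| * Real.sin (π * ω) ^ 2 := by
          have : 0 ≤ 1 - ω := sub_nonneg.mpr hω₁
          gcongr
          exact two_mul_mul_one_sub_le_sin_pi_mul hω₀.le hω₁
      _ = |C * Real.sin (π * ω) ^ 2| := by rw [abs_mul, abs_sq]
  rw [eq_neg_two_mul]
  refine mul_ne_zero (by norm_num) fun hzero ↦ hlt.ne' ?_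
  rw [eq_neg_of_add_eq_zero_left hzero, abs_neg]

end transmissionDeterminant

theorem abs_mul_two_pi_sub_lt {a δ : ℝ} (hδ : δ ≤ 1) (ha : |a| < δ ∨ |a - 2 * π| < δ) :
    |a * (2 * π - a)| < 8 * δ := by
  have near_zero {x : ℝ} (hx : |x| < δ) : |x * (2 * π - x)| < 8 * δ := by
    have hfactor : |2 * π - x| ≤ 8 := by
      rw [abs_le]
      constructor <;> linarith [abs_lt.mp hx, Real.pi_pos, Real.pi_lt_d2]
    calc |x * (2 * π - x)| = |2 * π - x| * |x| := by rw [abs_mul, mul_comm]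
      _ ≤ 8 * |x| := by gcongr
      _ < 8 * δ := by gcongr
  rcases ha with ha | ha
  · exact near_zero ha
  · rw [abs_sub_comm] at ha
    simpa only [sub_sub_cancel, mul_comm] using near_zero ha

theorem transmission_determinant_no_small_zero_near_endpoints_general {C Ω : ℝ} (hC : C ≠ 0)
    (hΩ : Ω < 1) :
    ∃ δ : ℝ, 0 < δ ∧ ∀ a : ℝ, (|a| < δ ∨ |a - 2 * π| < δ) →
      ∀ ω : ℝ, 0 < ω → ω ≤ Ω → transmissionDeterminant C a ω ≠ 0 := by
  have hgap : 0 < 1 - Ω := sub_pos.mpr hΩ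
  refine ⟨min 1 (|C| * (1 - Ω) ^ 2 / 2),
    lt_min one_pos (half_pos (mul_pos (abs_pos.mpr hC) (pow_pos hgap 2))),
    fun a ha ω hω₀ hω ↦ ?_⟩
  refine transmissionDeterminant.ne_zero_of_abs_mul_lt hω₀ (hω.trans hΩ.le) ?_
  calc |a * (2 * π - a)| < 8 * min 1 (|C| * (1 - Ω) ^ 2 / 2) :=
        abs_mul_two_pi_sub_lt (min_le_left _ _) ha
    _ ≤ 8 * (|C| * (1 - Ω) ^ 2 / 2) := by gcongr; exact min_le_right _ _
    _ = 4 * |C| * (1 - Ω) ^ 2 := by ring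
    _ ≤ 4 * |C| * (1 - ω) ^ 2 := by gcongr

/-- For every `C > 0` there is `δ > 0` such that for `a` close to `0` or to `2π`
(within `δ`), the function `f(ω) = −cos(2(a−π)ω) + (C+1)cos(2πω) − C` has no zero
in `(0, 3/4]`; that is, the smallest positive zero of `f` exceeds `3/4`. -/
theorem transmission_determinant_no_small_zero_near_endpoints (C : ℝ) (hC : 0 < C) :
    ∃ δ : ℝ, 0 < δ ∧
      ∀ a : ℝ, ((0 < a ∧ a < δ) ∨ (2 * π - δ < a ∧ a < 2 * π)) →
      ∀ ω : ℝ, 0 < ω → ω ≤ 3 / 4 →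
        -Real.cos (2 * (a - π) * ω) + (C + 1) * Real.cos (2 * π * ω) - C ≠ 0 := by
  obtain ⟨δ, hδ, hne⟩ := transmission_determinant_no_small_zero_near_endpoints_general hC.ne'
    (show (3 / 4 : ℝ) < 1 by norm_num)
  exact ⟨δ, hδ, fun a ha ↦ hne a (ha.imp (fun h ↦ abs_lt.mpr ⟨by linarith, h.2⟩)
    fun h ↦ abs_lt.mpr ⟨by linarith, by linarith⟩)⟩
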